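/- arXiv:0906.5432 — 2 statements merged into one kernel-verified Lean document; each statement's English description precedes it below -/
import Mathlib

section
/- Let q ≥ 2 and g ≥ 1 be real numbers and let B be a real number with 0 ≤ B ≤ q + 1 + 2g√q. Then (q + 1 − 2√q) · ((q^{g−1} − 1)/g) · ((B + q − 1)/(q − 1)) < 0.4 · (1 + √q/g) · q^g. -/
/-!
Put `s = √q` and `P = q ^ (g - 1) ≥ 1`. The left side is nondecreasing in `B`, and at the Weil bound
`B + q - 1 = 2 s (s + g)`, `q - 1 = (s - 1) (s + 1)`, so the factor `s + g` cancels and the claim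
becomes `5 (s - 1) (P - 1) < s (s + 1) P`. This holds because
`s (s + 1) - 5 (s - 1) = (s - 2) ^ 2 + 1 > 0`.
-/

theorem stmt_12 (q g B : ℝ) (hq : 2 ≤ q) (hg : 1 ≤ g)
    (hB0 : 0 ≤ B) (hBweil : B ≤ q + 1 + 2 * g * Real.sqrt q) :
    (q + 1 - 2 * Real.sqrt q) * ((q ^ (g - 1) - 1) / g) * ((B + q - 1) / (q - 1)) <
      0.4 * (1 + Real.sqrt q / g) * q ^ g := by
  have hP : 1 ≤ q ^ (g - 1) := Real.one_le_rpow (by linarith) (by linarith)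
  have hqg : q ^ g = q ^ (g - 1) * q := by
    rw [← Real.rpow_add_one (by linarith), sub_add_cancel]
  have hs1 : 1 < √q := by
    rw [Real.lt_sqrt (by norm_num)]; linarith
  have hsq : q = √q ^ 2 := (Real.sq_sqrt (by linarith)).symm
  rw [hqg]
  generalize q ^ (g - 1) = P at *
  generalize √q = s at *
  subst hsq
  have hs : 0 < s - 1 := by linarith
  have hg0 : 0 < g := by linarith
  have hq1 : 0 < s ^ 2 - 1 := by nlinarith
  have key : 5 * (s - 1) * (P - 1) < s * (s + 1) * P := by
    nlinarith [mul_pos (show 0 < (s - 2) ^ 2 + 1 by positivity) (show 0 < P by linarith)]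
  calc (s ^ 2 + 1 - 2 * s) * ((P - 1) / g) * ((B + s ^ 2 - 1) / (s ^ 2 - 1))
      ≤ (s ^ 2 + 1 - 2 * s) * ((P - 1) / g) * (2 * s * (s + g) / (s ^ 2 - 1)) := by
        have h1 : 0 ≤ s ^ 2 + 1 - 2 * s := by nlinarith [sq_nonneg (s - 1)]
        have h2 : 0 ≤ (P - 1) / g := div_nonneg (by linarith) hg0.le
        refine mul_le_mul_of_nonneg_left ?_ (mul_nonneg h1 h2)
        exact div_le_div_of_nonneg_right (by linarith) hq1.le
    _ = (2 * s * (s + g) / (5 * g * (s + 1))) * (5 * (s - 1) * (P - 1)) := by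
        have : s + 1 ≠ 0 := by linarith
        rw [show s ^ 2 - 1 = (s - 1) * (s + 1) by ring]
        field_simp
        ring
    _ < (2 * s * (s + g) / (5 * g * (s + 1))) * (s * (s + 1) * P) :=
        mul_lt_mul_of_pos_left key (by positivity)
    _ = 0.4 * (1 + s / g) * (P * s ^ 2) := by
        have : s + 1 ≠ 0 := by linarith
        field_simp
        ring
end

section
/- Let q ≥ 2 be a real number. Let (g_k)_{k≥1} be a sequence of reals with g_k > 1 tending to +∞, let (B_k)_{k≥1} be reals with 0 ≤ B_k ≤ q + 1 + 2g_k√q, and let (h_k)_{k≥1} be positive reals with h_k > q^{g_k} for all sufficiently large k. Set L₂(k) = (q + 1 − 2√q)·((q^{g_k−1} − 1)/g_k)·((B_k + q − 1)/(q − 1)). Then h_k/L₂(k) ≥ 2 for all sufficiently large k. -/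
open Filter Topology

/-!
Put `s = √q` and `X = q ^ (g - 1)`, so that `q - 1 = (s - 1) (s + 1)` and `q ^ g = X s²`. The Weil
bound gives `B + q - 1 ≤ 2 s (s + g)`, and then the bound `L₂` on the class number is at most
`2 X s (s - 1) (s + g) / ((s + 1) g)`. Once `g ≥ 4 s` we have `s + g ≤ 5 g / 4`, and
`2 L₂ ≤ X s² = q ^ g` follows from `5 (s - 1) ≤ s (s + 1)`, that is from `(s - 2)² + 1 ≥ 0`.
-/

theorem stmt_13 (q : ℝ) (hq : 2 ≤ q)
    (g : ℕ → ℝ) (hg1 : ∀ k, 1 < g k) (hgtop : Tendsto g atTop atTop)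
    (B : ℕ → ℝ) (hB0 : ∀ k, 0 ≤ B k)
    (hBweil : ∀ k, B k ≤ q + 1 + 2 * g k * Real.sqrt q)
    (h : ℕ → ℝ) (hhpos : ∀ k, 0 < h k)
    (hh : ∀ᶠ k in atTop, h k > q ^ (g k)) :
    ∀ᶠ k in atTop,
      h k / ((q + 1 - 2 * Real.sqrt q) * ((q ^ (g k - 1) - 1) / g k) *
        ((B k + q - 1) / (q - 1))) ≥ 2 := by
  filter_upwards [hh, hgtop.eventually_ge_atTop (4 * Real.sqrt q)] with k hk hgk
  have hg := hg1 k
  have hB := hB0 k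
  have hW := hBweil k
  have hX1 : 1 < q ^ (g k - 1) := Real.one_lt_rpow (by linarith) (by linarith)
  have hXq : q ^ (g k) = q ^ (g k - 1) * q := by
    rw [← Real.rpow_add_one (by linarith : q ≠ 0), sub_add_cancel]
  rw [hXq] at hk
  have hsq : Real.sqrt q ^ 2 = q := Real.sq_sqrt (by linarith)
  have hs1 : 1 < Real.sqrt q := by
    rw [Real.lt_sqrt (by norm_num)]
    linarith
  generalize q ^ (g k - 1) = X at *
  generalize Real.sqrt q = s at *
  generalize g k = G at *
  generalize B k = b at *
  subst hsq
  have hG : 0 < G := by linarith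
  have hs : 0 < s - 1 := by linarith
  have hq1 : 0 < s ^ 2 - 1 := by linarith
  have hsquare : s ^ 2 + 1 - 2 * s = (s - 1) ^ 2 := by ring
  rw [hsquare]
  have hpos : 0 < (s - 1) ^ 2 * ((X - 1) / G) * ((b + s ^ 2 - 1) / (s ^ 2 - 1)) := by
    have h1 : 0 < X - 1 := by linarith
    have h2 : 0 < b + s ^ 2 - 1 := by linarith
    positivity
  rw [ge_iff_le, le_div_iff₀ hpos]
  have hL : (s - 1) ^ 2 * ((X - 1) / G) * ((b + s ^ 2 - 1) / (s ^ 2 - 1)) ≤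
      (s - 1) ^ 2 * (X / G) * ((2 * s * (5 * G / 4)) / (s ^ 2 - 1)) := by
    have h2 : 0 ≤ b + s ^ 2 - 1 := by linarith
    have h3 : b + s ^ 2 - 1 ≤ 2 * s * (5 * G / 4) := by nlinarith
    have h4 : X - 1 ≤ X := by linarith
    have hX : 0 < X := by linarith
    gcongr
  have hval : (s - 1) ^ 2 * (X / G) * ((2 * s * (5 * G / 4)) / (s ^ 2 - 1)) =
      X * s * (5 * (s - 1)) / (2 * (s + 1)) := by
    have h5 : s + 1 ≠ 0 := by linarith
    have h6 : s ^ 2 - 1 = (s - 1) * (s + 1) := by ring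
    rw [h6]
    field_simp
    ring
  have hfin : X * s * (5 * (s - 1)) / (2 * (s + 1)) ≤ X * s ^ 2 / 2 := by
    have hXs : 0 < X * s := mul_pos (by linarith) (by linarith)
    rw [div_le_div_iff₀ (by linarith) (by norm_num)]
    nlinarith [mul_nonneg hXs.le (by nlinarith [sq_nonneg (s - 2)] :
      0 ≤ s * (s + 1) - 5 * (s - 1))]
  linarith
end
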